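/- arXiv:1501.02694 — 5 statements merged into one kernel-verified Lean document; each statement's English description precedes it below -/
import Mathlib

section
/- The real number I_cc := −2∫₀¹ 3x²(x²−3)/(2x⁴−6x²+9)² dx + 2∫₁² (7x−5x²)/(26x²−70x+49)² dx − 2∫₂⁵ 3x/(9+x²)² dx + ∫₅⁷ (3x²−21x)/((441/4) − (63/2)x + (13/4)x²)² dx is strictly negative. -/
lemma aux1 (x : ℝ) (h0 : 0 ≤ x) (h1 : x ≤ 1) :
    -(x^2/8 + 3/20*x^4) ≤ 3*x^2*(x^2-3)/(2*x^4-6*x^2+9)^2 := by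
  have hq : 0 < 2*x^4-6*x^2+9 := by nlinarith [sq_nonneg (x^2-3/2)]
  rw [le_div_iff₀ (by positivity)]
  obtain ⟨t, ht⟩ : ∃ t, t = x^2 := ⟨_, rfl⟩
  have ht0 : 0 ≤ t := by rw [ht]; positivity
  have ht1 : t ≤ 1 := by rw [ht]; nlinarith
  have key : 3*(3-t) ≤ (1/8+3/20*t)*(2*t^2-6*t+9)^2 := by
    have hs : 0 ≤ 1 - t := by linarith
    nlinarith [mul_nonneg ht0 hs, mul_nonneg (mul_nonneg ht0 hs) hs, mul_nonneg (mul_nonneg ht0 ht0) hs,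
      mul_nonneg (mul_nonneg (mul_nonneg ht0 hs) hs) hs, mul_nonneg (mul_nonneg ht0 ht0) (mul_nonneg hs hs),
      mul_nonneg (mul_nonneg ht0 ht0) (mul_nonneg ht0 hs), pow_nonneg ht0 5, pow_nonneg hs 5, pow_nonneg hs 4,
      mul_nonneg (pow_nonneg ht0 4) hs, mul_nonneg (pow_nonneg ht0 3) (pow_nonneg hs 2),
      mul_nonneg (pow_nonneg ht0 2) (pow_nonneg hs 3), mul_nonneg (pow_nonneg ht0 1) (pow_nonneg hs 4)]
  have := mul_le_mul_of_nonneg_left key ht0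
  rw [ht] at this
  nlinarith [this]

lemma int1 : -(1/24 + 3/100 : ℝ) ≤ ∫ x in (0:ℝ)..1, 3*x^2*(x^2-3)/(2*x^4-6*x^2+9)^2 := by
  have e : ∫ x in (0:ℝ)..1, -(x^2/8 + 3/20*x^4) = -(1/24 + 3/100 : ℝ) := by
    have := intervalIntegral.integral_eq_sub_of_hasDerivAt (a := 0) (b := 1)
      (f := fun x : ℝ => -(x^3/24 + 3/100*x^5)) (f' := fun x => -(x^2/8 + 3/20*x^4))
      (fun x _ => by
        have := ((((hasDerivAt_id x).pow 3).div_const 24).add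
          (((hasDerivAt_id x).pow 5).const_mul (3/100))).neg
        refine this.congr_deriv ?_
        simp; ring)
      (Continuous.intervalIntegrable (by fun_prop) _ _)
    rw [this]; norm_num
  rw [← e]
  apply intervalIntegral.integral_mono_on (by norm_num)
  · exact Continuous.intervalIntegrable (by fun_prop) _ _
  · refine Continuous.intervalIntegrable (Continuous.div (by fun_prop) (by fun_prop) fun x => ?_) _ _
    have hq : 0 < 2*x^4-6*x^2+9 := by nlinarith [sq_nonneg (x^2-3/2)]
    positivity
  · intro x hx
    exact aux1 x hx.1 hx.2

/-- Antiderivative of the form (a x + b) / (p x^2 + q x + r). -/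
lemma intQ (a b p q r u v : ℝ) (g : ℝ → ℝ) (hQ : ∀ x : ℝ, p*x^2+q*x+r ≠ 0)
    (hg : ∀ x, g x = (a*(p*x^2+q*x+r) - (a*x+b)*(2*p*x+q))/(p*x^2+q*x+r)^2) :
    ∫ x in u..v, g x = (a*v+b)/(p*v^2+q*v+r) - (a*u+b)/(p*u^2+q*u+r) := by
  have hc : Continuous g := by
    rw [funext hg]
    exact Continuous.div (by fun_prop) (by fun_prop) fun x => pow_ne_zero 2 (hQ x)
  refine intervalIntegral.integral_eq_sub_of_hasDerivAt
    (f := fun x => (a*x+b)/(p*x^2+q*x+r)) (fun x _ => ?_) (hc.intervalIntegrable _ _)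
  have h1 : HasDerivAt (fun x => a*x+b) a x := by
    simpa using ((hasDerivAt_id x).const_mul a).add_const b
  have h2 : HasDerivAt (fun x => p*x^2+q*x+r) (2*p*x+q) x := by
    have := ((((hasDerivAt_id x).pow 2).const_mul p).add ((hasDerivAt_id x).const_mul q)).add_const r
    refine this.congr_deriv ?_
    simp; ring
  rw [hg]
  exact h1.div h2 (hQ x)

/-- The center-center contribution `I_cc` to the derivative of the horizontal velocity at
the middle vertical tangent of the curve constructed in the paper is strictly negative. -/
theorem Icc_neg :
    (-2) * (∫ x in (0:ℝ)..1, 3*x^2*(x^2-3)/(2*x^4-6*x^2+9)^2)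
      + 2 * (∫ x in (1:ℝ)..2, (7*x-5*x^2)/(26*x^2-70*x+49)^2)
      - 2 * (∫ x in (2:ℝ)..5, 3*x/(9+x^2)^2)
      + (∫ x in (5:ℝ)..7, (3*x^2-21*x)/(441/4 - 63/2*x + 13/4*x^2)^2) < 0 := by
  have h1 := int1
  rw [intQ (5/26) (-7/52) 26 (-70) 49 1 2 (fun x => (7*x-5*x^2)/(26*x^2-70*x+49)^2)
      (fun x => ne_of_gt (by nlinarith [sq_nonneg (26*x-35)]))
      (fun x => by congr 1 <;> ring),
    intQ 0 (-3/2) 1 0 9 2 5 (fun x => 3*x/(9+x^2)^2)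
      (fun x => ne_of_gt (by nlinarith [sq_nonneg x]))
      (fun x => by congr 1 <;> ring),
    intQ (-12/13) (42/13) (13/4) (-63/2) (441/4) 5 7
      (fun x => (3*x^2-21*x)/(441/4 - 63/2*x + 13/4*x^2)^2)
      (fun x => ne_of_gt (by nlinarith [sq_nonneg (13*x-63)]))
      (fun x => by congr 1 <;> ring)]
  norm_num at h1 ⊢
  linarith
end

section
/- The real number I_tt := −∫_{−2}^{−1} x(2+x)/(2x²+4x+4)² dx + ∫_{−1}^{1} 3x²/(1+x⁴)² dx − ∫₁² x(x−2)/(2x²−4x+4)² dx is strictly greater than 1/4. -/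
/-- The tail-tail contribution `I_tt` to the derivative of the horizontal velocity at the
outer vertical tangents of the curve constructed in the paper is strictly greater than `1/4`. -/
theorem Itt_gt_quarter :
    (1/4 : ℝ) < -(∫ x in (-2:ℝ)..(-1), x*(2+x)/(2*x^2+4*x+4)^2)
      + (∫ x in (-1:ℝ)..1, 3*x^2/(1+x^4)^2)
      - (∫ x in (1:ℝ)..2, x*(x-2)/(2*x^2-4*x+4)^2) := by
  have h1 : 0 ≤ ∫ x in (-2:ℝ)..(-1), -(x*(2+x)/(2*x^2+4*x+4)^2) := by
    apply intervalIntegral.integral_nonneg (by norm_num)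
    intro x hx
    rw [← neg_div]
    exact div_nonneg (by nlinarith [hx.1, hx.2]) (sq_nonneg _)
  have h3 : 0 ≤ ∫ x in (1:ℝ)..2, -(x*(x-2)/(2*x^2-4*x+4)^2) := by
    apply intervalIntegral.integral_nonneg (by norm_num)
    intro x hx
    rw [← neg_div]
    exact div_nonneg (by nlinarith [hx.1, hx.2]) (sq_nonneg _)
  rw [intervalIntegral.integral_neg] at h1 h3
  have h2 : (∫ x in (-1:ℝ)..1, (3/4)*x^2) ≤ ∫ x in (-1:ℝ)..1, 3*x^2/(1+x^4)^2 := by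
    apply intervalIntegral.integral_mono_on (by norm_num)
    · exact (by fun_prop : Continuous fun x : ℝ => (3/4)*x^2).intervalIntegrable _ _
    · apply Continuous.intervalIntegrable
      refine Continuous.div (by fun_prop) (by fun_prop) ?_
      intro x
      positivity
    · intro x hx
      have hx2 : x^2 ≤ 1 := by nlinarith [hx.1, hx.2]
      have hx4 : x^4 ≤ 1 := by nlinarith [sq_nonneg x]
      have h0 : 0 ≤ x^4 := by positivity
      have h4 : (1+x^4)^2 ≤ 4 := by nlinarith
      rw [le_div_iff₀ (by positivity)]
      nlinarith [sq_nonneg x]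
  rw [intervalIntegral.integral_const_mul, integral_pow] at h2
  norm_num at h2
  linarith
end

section
/- For every real R > 9, the tail-center integral I_tc := 2∫_{−2}^{2} (R + z^t_1(β)) (z^t_1)'(β) z^t_2(β) / [(R + z^t_1(β))² + (z^t_2(β))²]² dβ satisfies |I_tc| ≤ 24(R+2)/(R−2)⁴, where (z^t_1)' denotes the derivative of z^t_1 (which exists except at the finitely many points β ∈ {−1, 1}, so the integrand is defined almost everywhere). -/
/-- First component of the tail curve `z^t` (its values outside `[-2,2]` are irrelevant). -/
noncomputable def zt1 (a : ℝ) : ℝ :=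
  if a ≤ -1 then a else if a ≤ 1 then a^3 else a

/-- Second component of the tail curve `z^t` (its values outside `[-2,2]` are irrelevant). -/
noncomputable def zt2 (a : ℝ) : ℝ :=
  if a ≤ -1 then -a - 2 else if a ≤ 1 then a else -a + 2

open Filter Topology in
lemma zt1_deriv_bound (b : ℝ) (h1 : b ≠ -1) (h2 : b ≠ 1) : |deriv zt1 b| ≤ 3 := by
  rcases lt_or_gt_of_ne h1 with h | h
  · have e : zt1 =ᶠ[𝓝 b] fun x => x := by
      filter_upwards [Iio_mem_nhds h] with x hx
      have hx' : x < -1 := hx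
      simp [zt1, hx'.le]
    rw [e.deriv_eq]
    simp
  · rcases lt_or_gt_of_ne h2 with h' | h'
    · have e : zt1 =ᶠ[𝓝 b] fun x => x ^ 3 := by
        filter_upwards [Iio_mem_nhds h', Ioi_mem_nhds h] with x hx hy
        have hx' : x < 1 := hx
        have hy' : -1 < x := hy
        simp [zt1, hx'.le, not_le.mpr hy']
      rw [e.deriv_eq]
      have : deriv (fun x : ℝ => x ^ 3) b = 3 * b ^ 2 := by simp
      rw [this, abs_le]
      constructor <;> nlinarith
    · have e : zt1 =ᶠ[𝓝 b] fun x => x := by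
        filter_upwards [Ioi_mem_nhds h'] with x hx
        have hx' : 1 < x := hx
        have hy' : -1 < x := by linarith
        simp [zt1, not_le.mpr hx', not_le.mpr hy']
      rw [e.deriv_eq]
      simp

lemma zt1_bound (b : ℝ) (h1 : -2 ≤ b) (h2 : b ≤ 2) : -2 ≤ zt1 b ∧ zt1 b ≤ 2 := by
  unfold zt1
  split_ifs with h h'
  · constructor <;> linarith
  · push Not at h
    constructor <;> nlinarith [sq_nonneg b, mul_nonneg (sub_nonneg.2 h') (sub_nonneg.2 h.le), sq_nonneg (b + 1), sq_nonneg (b - 1)]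
  · constructor <;> linarith

lemma zt2_bound (b : ℝ) (h1 : -2 ≤ b) (h2 : b ≤ 2) : |zt2 b| ≤ 1 := by
  unfold zt2
  rw [abs_le]
  split_ifs with h h' <;> constructor <;> linarith

/-- For every `R > 9`, the tail-center integral `I_tc` satisfies
`|I_tc| ≤ 24(R+2)/(R-2)⁴`. -/
theorem Itc_bound (R : ℝ) (hR : 9 < R) :
    |2 * ∫ b in (-2:ℝ)..2,
        (R + zt1 b) * deriv zt1 b * zt2 b / ((R + zt1 b)^2 + (zt2 b)^2)^2|
      ≤ 24 * (R + 2) / (R - 2)^4 := by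
  have key : ∀ᵐ b : ℝ, b ∈ Set.uIoc (-2:ℝ) 2 →
      ‖(R + zt1 b) * deriv zt1 b * zt2 b / ((R + zt1 b)^2 + (zt2 b)^2)^2‖
        ≤ 3 * (R + 2) / (R - 2)^4 := by
    have n1 : ∀ᵐ b : ℝ, b ≠ -1 := MeasureTheory.Measure.ae_ne _ _
    have n2 : ∀ᵐ b : ℝ, b ≠ 1 := MeasureTheory.Measure.ae_ne _ _
    filter_upwards [n1, n2] with b h1 h2 hb
    rw [Set.uIoc_of_le (by norm_num)] at hb
    obtain ⟨l, u⟩ := zt1_bound b hb.1.le hb.2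
    have hd := zt1_deriv_bound b h1 h2
    have hz := zt2_bound b hb.1.le hb.2
    have hp : 0 < R - 2 := by linarith
    rw [Real.norm_eq_abs, abs_div, abs_mul, abs_mul, abs_of_pos (show 0 < R + zt1 b by linarith),
      abs_of_nonneg (sq_nonneg ((R + zt1 b)^2 + (zt2 b)^2))]
    have hn : (R + zt1 b) * |deriv zt1 b| * |zt2 b| ≤ 3 * (R + 2) := by
      calc _ ≤ (R + 2) * 3 * 1 := by
            have : 0 ≤ R + zt1 b := by linarith
            have : 0 ≤ R + 2 := by linarith
            gcongr
        _ = _ := by ring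
    have hq : (R - 2)^4 ≤ ((R + zt1 b)^2 + (zt2 b)^2)^2 := by
      have : (R - 2)^2 ≤ (R + zt1 b)^2 + (zt2 b)^2 := by nlinarith [sq_nonneg (zt2 b)]
      calc (R - 2)^4 = ((R - 2)^2)^2 := by ring
        _ ≤ _ := by gcongr
    have : 0 ≤ 3 * (R + 2) := by linarith
    gcongr
  have h := intervalIntegral.norm_integral_le_of_norm_le_const_ae key
  rw [Real.norm_eq_abs] at h
  rw [abs_mul, abs_of_pos (by norm_num : (0:ℝ) < 2)]
  have e : |(2:ℝ) - -2| = 4 := by norm_num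
  rw [e] at h
  calc _ ≤ 2 * (3 * (R + 2) / (R - 2)^4 * 4) := by gcongr
    _ = _ := by ring
end

section
/- For every real R > 9, the integral I_ct^2 := ∫_{−R−2}^{−R+2} ((z^t_1(β+R) − R) − R) (z^t_1)'(β+R) z^t_2(β+R) / [(R − (z^t_1(β+R) − R))² + (z^t_2(β+R))²]² dβ satisfies |I_ct^2| ≤ 12(2R+2)/(2R−2)⁴, where (z^t_1)' denotes the derivative of z^t_1 (which exists except at finitely many points, so the integrand is defined almost everywhere). -/
theorem zt1_step (x y : ℝ) (h : x ≤ y) : 0 ≤ zt1 y - zt1 x ∧ zt1 y - zt1 x ≤ 3 * (y - x) := by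
  have key : ∀ u v : ℝ, -1 ≤ u → u ≤ v → v ≤ 1 → 0 ≤ v^3 - u^3 ∧ v^3 - u^3 ≤ 3 * (v - u) := by
    intro u v h1 h2 h3
    have e : v^3 - u^3 = (v - u) * (v^2 + v*u + u^2) := by ring
    have hv : v^2 + v*u + u^2 ≤ 3 := by nlinarith [sq_nonneg (v - u)]
    have hv0 : 0 ≤ v^2 + v*u + u^2 := by nlinarith [sq_nonneg (v + u), sq_nonneg v, sq_nonneg u]
    rw [e]
    have : 0 ≤ v - u := by linarith
    exact ⟨mul_nonneg this hv0, by nlinarith⟩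
  unfold zt1
  split_ifs with a b c d e f g
  all_goals try (exfalso; linarith)
  all_goals try (constructor <;> linarith)
  all_goals try push Not at *
  · have := key (-1) y le_rfl (by linarith) (by linarith)
    constructor <;> linarith
  · exact key x y (by linarith) h (by linarith)
  · have := key x 1 (by linarith) (by linarith) le_rfl
    constructor <;> linarith

theorem zt1_deriv (x : ℝ) : |deriv zt1 x| ≤ 3 := by
  rw [← Real.norm_eq_abs]
  apply norm_deriv_le_of_lip' (by norm_num)
  refine Filter.Eventually.of_forall fun y => ?_
  rw [Real.norm_eq_abs, Real.norm_eq_abs]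
  rcases le_total x y with h | h
  · have := zt1_step x y h
    rw [abs_of_nonneg this.1, abs_of_nonneg (by linarith)]
    exact this.2
  · have := zt1_step y x h
    rw [abs_sub_comm, abs_sub_comm y, abs_of_nonneg this.1, abs_of_nonneg (by linarith)]
    exact this.2

theorem zt1_range (x : ℝ) (h : -2 ≤ x) (h' : x ≤ 2) : |zt1 x| ≤ 2 := by
  rw [abs_le]
  unfold zt1
  split_ifs with a b
  · constructor <;> linarith
  · push Not at a
    constructor <;> nlinarith [sq_nonneg x, sq_nonneg (x+1), sq_nonneg (x-1)]
  · constructor <;> linarith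

theorem zt2_range (x : ℝ) (h : -2 ≤ x) (h' : x ≤ 2) : |zt2 x| ≤ 1 := by
  rw [abs_le]
  unfold zt2
  split_ifs with a b
  all_goals constructor <;> linarith

/-- For every `R > 9`, the contribution `I_ct^2` of the left tail to the velocity derivative
at the right vertical tangent satisfies `|I_ct^2| ≤ 12(2R+2)/(2R-2)⁴`. -/
theorem Ict2_bound (R : ℝ) (hR : 9 < R) :
    |∫ b in (-R-2)..(-R+2),
        ((zt1 (b + R) - R) - R) * deriv zt1 (b + R) * zt2 (b + R) /
          ((R - (zt1 (b + R) - R))^2 + (zt2 (b + R))^2)^2|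
      ≤ 12 * (2*R + 2) / (2*R - 2)^4 := by
  have hpos : (0:ℝ) < (2*R - 2)^4 := pow_pos (by linarith) 4
  have := intervalIntegral.norm_integral_le_of_norm_le_const (a := -R-2) (b := -R+2)
    (C := (2*R+2) * 3 * 1 / (2*R-2)^4)
    (f := fun b => ((zt1 (b + R) - R) - R) * deriv zt1 (b + R) * zt2 (b + R) /
          ((R - (zt1 (b + R) - R))^2 + (zt2 (b + R))^2)^2) ?_
  · rw [Real.norm_eq_abs] at this
    refine this.trans (le_of_eq ?_)
    rw [show -R + 2 - (-R - 2) = (4:ℝ) by ring, abs_of_pos (by norm_num : (0:ℝ) < 4)]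
    ring
  · intro b hb
    rw [Set.uIoc_of_le (by linarith)] at hb
    obtain ⟨hb1, hb2⟩ := hb
    have h1 := zt1_range (b + R) (by linarith) (by linarith)
    have h2 := zt2_range (b + R) (by linarith) (by linarith)
    have h3 := zt1_deriv (b + R)
    have h1' := abs_le.1 h1
    rw [Real.norm_eq_abs, abs_div, abs_mul, abs_mul]
    have hn : |zt1 (b + R) - R - R| ≤ 2*R+2 := by
      rw [abs_le]; constructor <;> linarith
    have hd : (2*R-2)^4 ≤ |((R - (zt1 (b + R) - R))^2 + (zt2 (b + R))^2)^2| := by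
      rw [abs_of_nonneg (sq_nonneg _), show (2*R-2)^4 = ((2*R-2)^2)^2 by ring]
      apply pow_le_pow_left₀ (sq_nonneg _)
      nlinarith [sq_nonneg (zt2 (b + R))]
    have : 0 ≤ 2*R+2 := by linarith
    gcongr
end

section
/- There exists R₀ > 9 such that for every real R ≥ R₀, the curve z^R satisfies both: (i) ∫_ℝ z^R_1(β) (z^R_1)'(β) z^R_2(β) / [(z^R_1(β))² + (z^R_2(β))²]² dβ < 0, and (ii) ∫_ℝ (z^R_1(β) − R) (z^R_1)'(β) z^R_2(β) / [(R − z^R_1(β))² + (z^R_2(β))²]² dβ > 0. Here (z^R_1)' denotes the derivative of z^R_1, which exists except at finitely many points, so each integrand is defined almost everywhere; moreover each integrand vanishes outside [−R−2, R+2], so both integrals converge. -/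
/-- First component of the center curve `z^c` (its values outside `[-7,7]` are irrelevant). -/
noncomputable def zc1 (a : ℝ) : ℝ :=
  if a ≤ -1 then a else if a ≤ 1 then a^3 else a

/-- Second component of the center curve `z^c` (its values outside `[-7,7]` are irrelevant). -/
noncomputable def zc2 (a : ℝ) : ℝ :=
  if a ≤ -5 then 3/2*a + 21/2
  else if a ≤ -2 then 3
  else if a ≤ -1 then -5*a - 7
  else if a ≤ 1 then 3*a - a^3
  else if a ≤ 2 then -5*a + 7
  else if a ≤ 5 then -3
  else 3/2*a - 21/2

/-- First component of the glued curve `z^R`: left tail, center, right tail, flat elsewhere. -/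
noncomputable def zR1 (R : ℝ) (a : ℝ) : ℝ :=
  if -R-2 ≤ a ∧ a ≤ -R+2 then zt1 (a + R) - R
  else if -7 ≤ a ∧ a ≤ 7 then zc1 a
  else if R-2 ≤ a ∧ a ≤ R+2 then zt1 (a - R) + R
  else a

/-- Second component of the glued curve `z^R`: left tail, center, right tail, flat elsewhere. -/
noncomputable def zR2 (R : ℝ) (a : ℝ) : ℝ :=
  if -R-2 ≤ a ∧ a ≤ -R+2 then zt2 (a + R)
  else if -7 ≤ a ∧ a ≤ 7 then zc2 a
  else if R-2 ≤ a ∧ a ≤ R+2 then zt2 (a - R)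
  else 0

open MeasureTheory Set intervalIntegral

/-- signed velocity-derivative integrand at the base point `x0` -/
noncomputable def ker (s x0 : ℝ) (z w : ℝ → ℝ) (b : ℝ) : ℝ :=
  s * ((z b - x0) * deriv z b * w b / ((x0 - z b)^2 + (w b)^2)^2)

/-- integrable on the interval with integral at most `c` -/
def PB (F : ℝ → ℝ) (a b c : ℝ) : Prop :=
  IntervalIntegrable F volume a b ∧ ∫ x in a..b, F x ≤ c

lemma PB.trans {F : ℝ → ℝ} {a b d c e : ℝ} (h1 : PB F a b c) (h2 : PB F b d e) :
    PB F a d (c + e) := by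
  refine ⟨h1.1.trans h2.1, ?_⟩
  rw [← integral_add_adjacent_intervals h1.1 h2.1]
  exact add_le_add h1.2 h2.2

lemma PB.core {F h g G : ℝ → ℝ} {a b c : ℝ} (hab : a ≤ b)
    (hF : ∀ x ∈ Ioo a b, F x = h x) (hc : ContinuousOn h (Icc a b))
    (hG : ∀ x ∈ Icc a b, HasDerivAt G (g x) x) (hg : ContinuousOn g (Icc a b))
    (hle : ∀ x ∈ Icc a b, h x ≤ g x) (hcc : G b - G a ≤ c) : PB F a b c := by
  have hi : IntervalIntegrable h volume a b := hc.intervalIntegrable_of_Icc hab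
  have hgi : IntervalIntegrable g volume a b := hg.intervalIntegrable_of_Icc hab
  have hae : ∀ᵐ x ∂volume, x ∈ uIoc a b → h x = F x := by
    have : ∀ᵐ x ∂(volume : Measure ℝ), x ≠ b := by
      simp [ae_iff, measure_singleton]
    filter_upwards [this] with x hx hx2
    rw [uIoc_of_le hab] at hx2
    exact (hF x ⟨hx2.1, lt_of_le_of_ne hx2.2 hx⟩).symm
  refine ⟨hi.congr_ae ((ae_restrict_iff' measurableSet_uIoc).2 hae), ?_⟩
  rw [← integral_congr_ae hae]
  refine le_trans (integral_mono_on hab hi hgi hle) ?_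
  rw [integral_eq_sub_of_hasDerivAt (fun x hx => hG x (by rwa [uIcc_of_le hab] at hx)) hgi]
  exact hcc

lemma deriv_of_eq {z p : ℝ → ℝ} {a b x d : ℝ} (hz : ∀ x ∈ Ioo a b, z x = p x)
    (hx : x ∈ Ioo a b) (hd : HasDerivAt p d x) : deriv z x = d := by
  have : z =ᶠ[nhds x] p := by
    filter_upwards [isOpen_Ioo.mem_nhds hx] with y hy using hz y hy
  rw [this.deriv_eq, hd.deriv]

/-- piece where the second component vanishes -/
lemma PB.zero {s x0 a b : ℝ} {z w : ℝ → ℝ} (hab : a ≤ b) (hw : ∀ x ∈ Ioo a b, w x = 0) :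
    PB (ker s x0 z w) a b 0 := by
  refine PB.core (h := fun _ => 0) (g := fun _ => 0) (G := fun _ => 0) hab ?_
    continuousOn_const (fun x _ => hasDerivAt_const x 0) continuousOn_const (fun _ _ => le_rfl)
    (by simp)
  intro x hx
  simp [ker, hw x hx]

/-- linear piece: exact evaluation -/
lemma PB.lin {s x0 m c a b e : ℝ} {z w : ℝ → ℝ} (hab : a ≤ b) (hc : c ≠ 0)
    (hz : ∀ x ∈ Ioo a b, z x = x) (hw : ∀ x ∈ Ioo a b, w x = m * (x - x0) + c)
    (he : s * ((b-x0)^2 / (2*c*((b-x0)^2 + (m*(b-x0)+c)^2)))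
      - s * ((a-x0)^2 / (2*c*((a-x0)^2 + (m*(a-x0)+c)^2))) ≤ e) :
    PB (ker s x0 z w) a b e := by
  have hpos : ∀ x : ℝ, 0 < (x-x0)^2 + (m*(x-x0)+c)^2 := by
    intro x
    by_cases h : x - x0 = 0
    · rw [h]; have := sq_pos_of_ne_zero hc; nlinarith
    · have := sq_pos_of_ne_zero h; positivity
  have hcont : Continuous (fun x : ℝ => s * ((x-x0) * (m*(x-x0)+c) / ((x-x0)^2 + (m*(x-x0)+c)^2)^2)) := by
    refine continuous_const.mul (Continuous.div (by fun_prop) (by fun_prop) ?_)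
    intro x; exact pow_ne_zero _ (hpos x).ne'
  refine PB.core (h := fun x => s * ((x-x0) * (m*(x-x0)+c) / ((x-x0)^2 + (m*(x-x0)+c)^2)^2))
    (g := fun x => s * ((x-x0) * (m*(x-x0)+c) / ((x-x0)^2 + (m*(x-x0)+c)^2)^2))
    (G := fun x => s * ((x-x0)^2 / (2*c*((x-x0)^2 + (m*(x-x0)+c)^2)))) hab ?_
    hcont.continuousOn ?_ hcont.continuousOn (fun _ _ => le_rfl) he
  · intro x hx
    rw [ker, deriv_of_eq hz hx (hasDerivAt_id' x), hz x hx, hw x hx]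
    rw [show (x0 - x)^2 = (x-x0)^2 by ring]
    ring
  · intro x _
    have h1 : HasDerivAt (fun x : ℝ => x - x0) 1 x := (hasDerivAt_id' x).sub_const x0
    have h2 := h1.pow 2
    have h3 := ((h1.const_mul m).add_const c).pow 2
    have h4 := ((h2.div ((h2.add h3).const_mul (2*c))
      (mul_ne_zero (mul_ne_zero two_ne_zero hc) (hpos x).ne')).const_mul s)
    refine HasDerivAt.congr_deriv h4 ?_
    have := (hpos x).ne'
    simp only [Pi.pow_apply, Pi.add_apply]
    field_simp
    push_cast
    ring

/-- far piece: crude bound -/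
lemma PB.far {s x0 a b e : ℝ} {z w p q d : ℝ → ℝ} (hab : a ≤ b) (hs : |s| ≤ 1)
    (hz : ∀ x ∈ Ioo a b, z x = p x) (hw : ∀ x ∈ Ioo a b, w x = q x)
    (hp : ∀ x, HasDerivAt p (d x) x) (hd : Continuous d) (hq : Continuous q)
    (hpb : ∀ x ∈ Icc a b, 500 ≤ |p x - x0|) (hqb : ∀ x ∈ Icc a b, |q x| ≤ 3)
    (hdb : ∀ x ∈ Icc a b, |d x| ≤ 3) (he : (b - a) / 1000000 ≤ e) :
    PB (ker s x0 z w) a b e := by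
  have hpc : Continuous p := continuous_iff_continuousAt.2 fun x => (hp x).continuousAt
  have hpos : ∀ x ∈ Icc a b, 0 < (x0 - p x)^2 + (q x)^2 := by
    intro x hx
    have h1 := hpb x hx
    have : 0 < (p x - x0)^2 := by rw [← sq_abs]; positivity
    nlinarith [sq_nonneg (q x)]
  refine PB.core (h := fun x => s * ((p x - x0) * d x * q x / ((x0 - p x)^2 + (q x)^2)^2))
    (g := fun x => 1 / 1000000) (G := fun x => x * (1/1000000)) hab ?_ ?_ ?_ ?_ ?_ ?_
  · intro x hx
    rw [ker, deriv_of_eq hz hx (hp x), hz x hx, hw x hx]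
  · refine continuousOn_const.mul (ContinuousOn.div (by fun_prop) (by fun_prop) ?_)
    intro x hx; exact pow_ne_zero _ (hpos x hx).ne'
  · intro x _
    simpa using (hasDerivAt_id' x).mul_const (1/1000000 : ℝ)
  · exact continuousOn_const
  · intro x hx
    refine le_trans (le_abs_self _) ?_
    rw [abs_mul, abs_div, abs_mul, abs_mul, abs_of_pos (pow_pos (hpos x hx) 2)]
    set D := |p x - x0| with hD
    have hDD : D ^ 2 = (x0 - p x)^2 := by rw [hD, sq_abs]; ring
    have h5 : 500 ≤ D := hpb x hx
    have hden : D^4 ≤ ((x0 - p x)^2 + (q x)^2)^2 := by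
      rw [← hDD]; nlinarith [sq_nonneg (q x), sq_nonneg D, mul_nonneg (sq_nonneg (q x)) (sq_nonneg D)]
    have hD0 : 0 < D := by linarith
    have hnum : D * |d x| * |q x| ≤ 9 * D := by
      have : |d x| * |q x| ≤ 3 * 3 := mul_le_mul (hdb x hx) (hqb x hx) (abs_nonneg _) (by norm_num)
      nlinarith
    have h6 : D * |d x| * |q x| / ((x0 - p x)^2 + (q x)^2)^2 ≤ 1/1000000 := by
      rw [div_le_div_iff₀ (pow_pos (hpos x hx) 2) (by norm_num)]
      have : (500:ℝ)^3 ≤ D^3 := by gcongr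
      nlinarith
    calc _ ≤ 1 * (D * |d x| * |q x| / ((x0 - p x)^2 + (q x)^2)^2) := by gcongr
      _ ≤ _ := by linarith
  · linarith

lemma PB.farlin {s x0 a b e m c : ℝ} {z w : ℝ → ℝ} (hab : a ≤ b) (hs : |s| ≤ 1)
    (hz : ∀ x ∈ Ioo a b, z x = x) (hw : ∀ x ∈ Ioo a b, w x = m * x + c)
    (hpb : x0 + 500 ≤ a ∨ b ≤ x0 - 500) (hqa : |m * a + c| ≤ 3) (hqb : |m * b + c| ≤ 3)
    (he : (b - a) / 1000000 ≤ e) :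
    PB (ker s x0 z w) a b e := by
  refine PB.far (p := fun x => x) (q := fun x => m*x+c) (d := fun _ => 1) hab hs hz hw
    (fun x => hasDerivAt_id' x) (by fun_prop) (by fun_prop) ?_ ?_ ?_ he
  · rintro x ⟨h1, h2⟩
    rcases hpb with h | h
    · exact le_trans (by linarith) (le_abs_self _)
    · exact le_trans (by linarith) (neg_le_abs _)
  · rintro x ⟨h1, h2⟩
    rw [abs_le] at *
    rcases le_total 0 m with h | h
    · constructor <;> nlinarith
    · constructor <;> nlinarith
  · intro x _; norm_num

lemma PB.farcube {s x0 y0 k l e : ℝ} {z w : ℝ → ℝ} (hs : |s| ≤ 1)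
    (hz : ∀ x ∈ Ioo (y0 - 1) (y0 + 1), z x = (x - y0)^3 + y0)
    (hw : ∀ x ∈ Ioo (y0 - 1) (y0 + 1), w x = k * (x - y0) - l * (x - y0)^3)
    (hkl : ∀ t : ℝ, |t| ≤ 1 → |k * t - l * t^3| ≤ 3)
    (hpb : x0 + 501 ≤ y0 ∨ y0 ≤ x0 - 501)
    (he : 2 / 1000000 ≤ e) :
    PB (ker s x0 z w) (y0 - 1) (y0 + 1) e := by
  have key : ∀ x ∈ Icc (y0 - 1) (y0 + 1), |x - y0| ≤ 1 := by
    rintro x ⟨h1, h2⟩; rw [abs_le]; constructor <;> linarith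
  refine PB.far (p := fun x => (x - y0)^3 + y0) (q := fun x => k * (x - y0) - l * (x - y0)^3)
    (d := fun x => 3 * (x - y0)^2) (by linarith) hs hz hw
    ?_ (by fun_prop) (by fun_prop) ?_ ?_ ?_ (by linarith)
  · intro x
    simpa using (((hasDerivAt_id' x).sub_const y0).pow 3).add_const y0
  · intro x hx
    have h3 : |(x - y0)^3| ≤ 1 := by rw [abs_pow]; exact pow_le_one₀ (abs_nonneg _) (key x hx)
    rw [abs_le] at h3
    rcases hpb with h | h
    · exact le_trans (by linarith) (le_abs_self _)
    · exact le_trans (by linarith) (neg_le_abs _)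
  · intro x hx; exact hkl _ (key x hx)
  · intro x hx
    have := pow_le_one₀ (n := 2) (abs_nonneg _) (key x hx)
    rw [abs_mul, abs_pow, abs_of_pos (by norm_num : (0:ℝ) < 3)]; linarith

/-- central cubic piece for the base point 0 -/
lemma PB.center {z w : ℝ → ℝ}
    (hz : ∀ x ∈ Ioo (-1 : ℝ) 1, z x = x^3)
    (hw : ∀ x ∈ Ioo (-1 : ℝ) 1, w x = 3 * x - x^3) :
    PB (ker 1 0 z w) (-1) 1 (2 * (1/27 + 1/30)) := by
  have hpos : ∀ x : ℝ, 0 < x^4 + (3 - x^2)^2 := by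
    intro x; nlinarith [sq_nonneg (x^2), sq_nonneg (x^2 - 3/2)]
  have hcont : Continuous (fun x : ℝ => 3 * x^2 * (3 - x^2) / (x^4 + (3 - x^2)^2)^2) := by
    refine Continuous.div (by fun_prop) (by fun_prop) ?_
    intro x; exact pow_ne_zero _ (hpos x).ne'
  refine PB.core (h := fun x => 3 * x^2 * (3 - x^2) / (x^4 + (3 - x^2)^2)^2)
    (g := fun x => x^2 / 9 + x^4 / 6) (G := fun x => x^3 / 27 + x^5 / 30) (by norm_num) ?_
    hcont.continuousOn ?_ (by fun_prop) ?_ (by norm_num)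
  · intro x hx
    rw [ker, deriv_of_eq hz hx (hasDerivAt_pow 3 x), hz x hx, hw x hx]
    by_cases h0 : x = 0
    · simp [h0]
    · have := (hpos x).ne'
      rw [show (0 - x^3)^2 + (3*x - x^3)^2 = x^2 * (x^4 + (3 - x^2)^2) by ring]
      field_simp
      push_cast
      try ring
  · intro x _
    refine HasDerivAt.congr_deriv
      (((hasDerivAt_pow 3 x).div_const 27).add ((hasDerivAt_pow 5 x).div_const 30)) ?_
    push_cast; ring
  · rintro x ⟨h1, h2⟩
    have hu : x^2 ≤ 1 := by nlinarith
    have hu0 := sq_nonneg x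
    show 3 * x^2 * (3 - x^2) / (x^4 + (3 - x^2)^2)^2 ≤ x^2 / 9 + x^4 / 6
    rw [div_le_iff₀ (pow_pos (hpos x) 2)]
    rw [show x^4 = (x^2)^2 by ring]
    generalize x^2 = u at hu hu0
    have : 0 ≤ (2 + 3 * u) * (u^2 + (3-u)^2)^2 - 54 * (3 - u) := by
      have e : (2 + 3 * u) * (u^2 + (3-u)^2)^2 - 54 * (3 - u)
          = u * ((81 - 180*u + 104*u^2) + 64*u^2*(1-u) + 12*u^4) := by ring
      rw [e]
      have h1 : 0 ≤ 81 - 180*u + 104*u^2 := by nlinarith [sq_nonneg (u - 45/52)]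
      have h2 : 0 ≤ 1 - u := by linarith
      positivity
    nlinarith [mul_nonneg hu0 this]

/-- central cubic piece for the base point of a tail -/
lemma PB.tail {R : ℝ} {z w : ℝ → ℝ}
    (hz : ∀ x ∈ Ioo (R - 1) (R + 1), z x = (x - R)^3 + R)
    (hw : ∀ x ∈ Ioo (R - 1) (R + 1), w x = x - R) :
    PB (ker (-1) R z w) (R - 1) (R + 1) 0 := by
  have hpos : ∀ x : ℝ, 0 < (x - R)^4 + 1 := by
    intro x; positivity
  have hcont : Continuous (fun x : ℝ => - (3 * (x - R)^2 / ((x - R)^4 + 1)^2)) := by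
    refine (Continuous.div (by fun_prop) (by fun_prop) ?_).neg
    intro x; exact pow_ne_zero _ (hpos x).ne'
  refine PB.core (h := fun x => - (3 * (x - R)^2 / ((x - R)^4 + 1)^2))
    (g := fun x => 0) (G := fun x => 0) (by linarith) ?_
    hcont.continuousOn (fun x _ => hasDerivAt_const x 0) (by fun_prop) ?_ (by norm_num)
  · intro x hx
    have hd : HasDerivAt (fun x : ℝ => (x - R)^3 + R) (3 * (x-R)^2) x := by
      simpa using (((hasDerivAt_id' x).sub_const R).pow 3).add_const R
    rw [ker, deriv_of_eq hz hx hd, hz x hx, hw x hx]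
    generalize hy : x - R = y
    have hp := (hpos x).ne'
    rw [hy] at hp
    by_cases h0 : y = 0
    · simp [h0]
    · rw [show (R - (y^3 + R))^2 + y^2 = y^2 * (y^4 + 1) by ring]
      field_simp
      ring
  · intro x _
    have : 0 ≤ 3 * (x - R)^2 / ((x - R)^4 + 1)^2 := by positivity
    show -(3 * (x - R)^2 / ((x - R)^4 + 1)^2) ≤ 0
    linarith

lemma total {s x0 R c : ℝ} (hR : 1000 ≤ R)
    (h : PB (ker s x0 (zR1 R) (zR2 R)) (-R-2) (R+2) c) :
    ∫ b, ker s x0 (zR1 R) (zR2 R) b ≤ c := by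
  have h2 := h.2
  rw [integral_of_le (by linarith), setIntegral_eq_integral_of_forall_compl_eq_zero] at h2
  · exact h2
  · intro x hx
    have : zR2 R x = 0 := by
      simp only [mem_Ioc, not_and_or, not_lt, not_le] at hx
      unfold zR2 zt2
      rcases hx with hx | hx <;> split_ifs <;> grind
    simp [ker, this]

theorem exists_R_turning :
    ∃ R₀ : ℝ, 9 < R₀ ∧ ∀ R : ℝ, R₀ ≤ R →
      (∫ b : ℝ, zR1 R b * deriv (zR1 R) b * zR2 R b /
          ((zR1 R b)^2 + (zR2 R b)^2)^2) < 0 ∧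
      0 < ∫ b : ℝ, (zR1 R b - R) * deriv (zR1 R) b * zR2 R b /
          ((R - zR1 R b)^2 + (zR2 R b)^2)^2 := by
  refine ⟨1000, by norm_num, fun R hR => ?_⟩
  have d1 : ∀ x ∈ Ioo (-R-2) (-R-1), zR1 R x = x ∧ zR2 R x = (-1) * x + (-R-2) := by
    rintro x ⟨h1, h2⟩
    unfold zR1 zR2 zt1 zt2; constructor <;> grind
  have d2 : ∀ x ∈ Ioo (-R-1) (-R+1), zR1 R x = (x - -R)^3 + -R ∧
      zR2 R x = 1 * (x - -R) - 0 * (x - -R)^3 := by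
    rintro x ⟨h1, h2⟩
    unfold zR1 zR2 zt1 zt2; constructor <;> grind
  have d3 : ∀ x ∈ Ioo (-R+1) (-R+2), zR1 R x = x ∧ zR2 R x = (-1) * x + (-R+2) := by
    rintro x ⟨h1, h2⟩
    unfold zR1 zR2 zt1 zt2; constructor <;> grind
  have d4 : ∀ x ∈ Ioo (-R+2) (-7), zR2 R x = 0 := by
    rintro x ⟨h1, h2⟩
    unfold zR2; grind
  have d5 : ∀ x ∈ Ioo (-7:ℝ) (-5), zR1 R x = x ∧ zR2 R x = 3/2 * x + 21/2 := by
    rintro x ⟨h1, h2⟩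
    unfold zR1 zR2 zc1 zc2; constructor <;> grind
  have d6 : ∀ x ∈ Ioo (-5:ℝ) (-2), zR1 R x = x ∧ zR2 R x = 0 * x + 3 := by
    rintro x ⟨h1, h2⟩
    unfold zR1 zR2 zc1 zc2; constructor <;> grind
  have d7 : ∀ x ∈ Ioo (-2:ℝ) (-1), zR1 R x = x ∧ zR2 R x = (-5) * x + (-7) := by
    rintro x ⟨h1, h2⟩
    unfold zR1 zR2 zc1 zc2; constructor <;> grind
  have d8 : ∀ x ∈ Ioo (-1:ℝ) 1, zR1 R x = x^3 ∧ zR2 R x = 3 * x - x^3 := by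
    rintro x ⟨h1, h2⟩
    unfold zR1 zR2 zc1 zc2; constructor <;> grind
  have d9 : ∀ x ∈ Ioo (1:ℝ) 2, zR1 R x = x ∧ zR2 R x = (-5) * x + 7 := by
    rintro x ⟨h1, h2⟩
    unfold zR1 zR2 zc1 zc2; constructor <;> grind
  have d10 : ∀ x ∈ Ioo (2:ℝ) 5, zR1 R x = x ∧ zR2 R x = 0 * x + (-3) := by
    rintro x ⟨h1, h2⟩
    unfold zR1 zR2 zc1 zc2; constructor <;> grind
  have d11 : ∀ x ∈ Ioo (5:ℝ) 7, zR1 R x = x ∧ zR2 R x = 3/2 * x + (-21/2) := by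
    rintro x ⟨h1, h2⟩
    unfold zR1 zR2 zc1 zc2; constructor <;> grind
  have d12 : ∀ x ∈ Ioo (7:ℝ) (R-2), zR2 R x = 0 := by
    rintro x ⟨h1, h2⟩
    unfold zR2; grind
  have d13 : ∀ x ∈ Ioo (R-2) (R-1), zR1 R x = x ∧ zR2 R x = (-1) * x + (R-2) := by
    rintro x ⟨h1, h2⟩
    unfold zR1 zR2 zt1 zt2; constructor <;> grind
  have d14 : ∀ x ∈ Ioo (R-1) (R+1), zR1 R x = (x - R)^3 + R ∧
      zR2 R x = 1 * (x - R) - 0 * (x - R)^3 := by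
    rintro x ⟨h1, h2⟩
    unfold zR1 zR2 zt1 zt2; constructor <;> grind
  have d15 : ∀ x ∈ Ioo (R+1) (R+2), zR1 R x = x ∧ zR2 R x = (-1) * x + (R+2) := by
    rintro x ⟨h1, h2⟩
    unfold zR1 zR2 zt1 zt2; constructor <;> grind
  -- the left tail and the left flat part are far from both base points
  have left : ∀ s x0 : ℝ, |s| ≤ 1 → 0 ≤ x0 →
      PB (ker s x0 (zR1 R) (zR2 R)) (-R-2) (-7)
        (1/1000000 + 2/1000000 + 1/1000000 + 0) := by
    intro s x0 hs hx0
    have p1 : PB (ker s x0 (zR1 R) (zR2 R)) (-R-2) (-R-1) (1/1000000) :=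
      PB.farlin (by linarith) hs (fun x hx => (d1 x hx).1) (fun x hx => (d1 x hx).2)
        (Or.inr (by linarith)) (by rw [abs_le]; constructor <;> linarith)
        (by rw [abs_le]; constructor <;> linarith) (by linarith)
    have p2 : PB (ker s x0 (zR1 R) (zR2 R)) (-R-1) (-R+1) (2/1000000) :=
      PB.farcube (y0 := -R) hs (fun x hx => (d2 x hx).1) (fun x hx => (d2 x hx).2)
        (fun t ht => by simpa using ht.trans (by norm_num))
        (Or.inr (by linarith)) (by linarith)
    have p3 : PB (ker s x0 (zR1 R) (zR2 R)) (-R+1) (-R+2) (1/1000000) :=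
      PB.farlin (by linarith) hs (fun x hx => (d3 x hx).1) (fun x hx => (d3 x hx).2)
        (Or.inr (by linarith)) (by rw [abs_le]; constructor <;> linarith)
        (by rw [abs_le]; constructor <;> linarith) (by linarith)
    have p4 : PB (ker s x0 (zR1 R) (zR2 R)) (-R+2) (-7) 0 := PB.zero (by linarith) d4
    exact ((p1.trans p2).trans p3).trans p4
  constructor
  · have q5 : PB (ker 1 0 (zR1 R) (zR2 R)) (-7) (-5) (-3/238) :=
      PB.lin (m := 3/2) (c := 21/2) (by norm_num) (by norm_num) (fun x hx => (d5 x hx).1)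
        (fun x hx => by rw [(d5 x hx).2]; ring) (by norm_num)
    have q6 : PB (ker 1 0 (zR1 R) (zR2 R)) (-5) (-2) (-63/884) :=
      PB.lin (m := 0) (c := 3) (by norm_num) (by norm_num) (fun x hx => (d6 x hx).1)
        (fun x hx => by rw [(d6 x hx).2]; ring) (by norm_num)
    have q7 : PB (ker 1 0 (zR1 R) (zR2 R)) (-2) (-1) (1/130) :=
      PB.lin (m := -5) (c := -7) (by norm_num) (by norm_num) (fun x hx => (d7 x hx).1)
        (fun x hx => by rw [(d7 x hx).2]; ring) (by norm_num)
    have q8 := PB.center (fun x hx => (d8 x hx).1) (fun x hx => (d8 x hx).2)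
    have q9 : PB (ker 1 0 (zR1 R) (zR2 R)) 1 2 (1/130) :=
      PB.lin (m := -5) (c := 7) (by norm_num) (by norm_num) (fun x hx => (d9 x hx).1)
        (fun x hx => by rw [(d9 x hx).2]; ring) (by norm_num)
    have q10 : PB (ker 1 0 (zR1 R) (zR2 R)) 2 5 (-63/884) :=
      PB.lin (m := 0) (c := -3) (by norm_num) (by norm_num) (fun x hx => (d10 x hx).1)
        (fun x hx => by rw [(d10 x hx).2]; ring) (by norm_num)
    have q11 : PB (ker 1 0 (zR1 R) (zR2 R)) 5 7 (-3/238) :=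
      PB.lin (m := 3/2) (c := -21/2) (by norm_num) (by norm_num) (fun x hx => (d11 x hx).1)
        (fun x hx => by rw [(d11 x hx).2]; ring) (by norm_num)
    have q12 : PB (ker 1 0 (zR1 R) (zR2 R)) 7 (R-2) 0 := PB.zero (by linarith) d12
    have q13 : PB (ker 1 0 (zR1 R) (zR2 R)) (R-2) (R-1) (1/1000000) :=
      PB.farlin (by linarith) (by norm_num) (fun x hx => (d13 x hx).1) (fun x hx => (d13 x hx).2)
        (Or.inl (by linarith)) (by rw [abs_le]; constructor <;> linarith)
        (by rw [abs_le]; constructor <;> linarith) (by linarith)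
    have q14 : PB (ker 1 0 (zR1 R) (zR2 R)) (R-1) (R+1) (2/1000000) :=
      PB.farcube (y0 := R) (by norm_num) (fun x hx => (d14 x hx).1) (fun x hx => (d14 x hx).2)
        (fun t ht => by simpa using ht.trans (by norm_num))
        (Or.inl (by linarith)) (by linarith)
    have q15 : PB (ker 1 0 (zR1 R) (zR2 R)) (R+1) (R+2) (1/1000000) :=
      PB.farlin (by linarith) (by norm_num) (fun x hx => (d15 x hx).1) (fun x hx => (d15 x hx).2)
        (Or.inl (by linarith)) (by rw [abs_le]; constructor <;> linarith)
        (by rw [abs_le]; constructor <;> linarith) (by linarith)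
    have := total hR ((left 1 0 (by norm_num) le_rfl).trans (q5.trans (q6.trans (q7.trans
      (q8.trans (q9.trans (q10.trans (q11.trans (q12.trans (q13.trans (q14.trans q15)))))))))))
    refine lt_of_le_of_lt (le_of_eq_of_le ?_ this) (by norm_num)
    congr 1
    funext b
    simp [ker]
  · have q5 : PB (ker (-1) R (zR1 R) (zR2 R)) (-7) (-5) (2/1000000) :=
      PB.farlin (by linarith) (by norm_num) (fun x hx => (d5 x hx).1) (fun x hx => (d5 x hx).2)
        (Or.inr (by linarith)) (by rw [abs_le]; constructor <;> norm_num)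
        (by rw [abs_le]; constructor <;> norm_num) (by norm_num)
    have q6 : PB (ker (-1) R (zR1 R) (zR2 R)) (-5) (-2) (3/1000000) :=
      PB.farlin (by linarith) (by norm_num) (fun x hx => (d6 x hx).1) (fun x hx => (d6 x hx).2)
        (Or.inr (by linarith)) (by rw [abs_le]; constructor <;> norm_num)
        (by rw [abs_le]; constructor <;> norm_num) (by norm_num)
    have q7 : PB (ker (-1) R (zR1 R) (zR2 R)) (-2) (-1) (1/1000000) :=
      PB.farlin (by linarith) (by norm_num) (fun x hx => (d7 x hx).1) (fun x hx => (d7 x hx).2)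
        (Or.inr (by linarith)) (by rw [abs_le]; constructor <;> norm_num)
        (by rw [abs_le]; constructor <;> norm_num) (by norm_num)
    have q8 : PB (ker (-1) R (zR1 R) (zR2 R)) (-1) 1 (2/1000000) := by
      have := PB.farcube (s := -1) (x0 := R) (y0 := 0) (k := 3) (l := 1) (e := 2/1000000)
        (z := zR1 R) (w := zR2 R) (by norm_num)
        (fun x hx => by rw [(d8 x (by simpa using hx)).1]; ring)
        (fun x hx => by rw [(d8 x (by simpa using hx)).2]; ring)
        (fun t ht => by
          rw [abs_le] at *
          obtain ⟨h1, h2⟩ := ht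
          constructor <;> nlinarith [mul_nonneg (sub_nonneg.2 h2) (sq_nonneg (t+1)),
            mul_nonneg (neg_le_iff_add_nonneg.1 h1) (sq_nonneg (t-1))])
        (Or.inr (by linarith)) le_rfl
      simpa using this
    have q9 : PB (ker (-1) R (zR1 R) (zR2 R)) 1 2 (1/1000000) :=
      PB.farlin (by linarith) (by norm_num) (fun x hx => (d9 x hx).1) (fun x hx => (d9 x hx).2)
        (Or.inr (by linarith)) (by rw [abs_le]; constructor <;> norm_num)
        (by rw [abs_le]; constructor <;> norm_num) (by norm_num)
    have q10 : PB (ker (-1) R (zR1 R) (zR2 R)) 2 5 (3/1000000) :=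
      PB.farlin (by linarith) (by norm_num) (fun x hx => (d10 x hx).1) (fun x hx => (d10 x hx).2)
        (Or.inr (by linarith)) (by rw [abs_le]; constructor <;> norm_num)
        (by rw [abs_le]; constructor <;> norm_num) (by norm_num)
    have q11 : PB (ker (-1) R (zR1 R) (zR2 R)) 5 7 (2/1000000) :=
      PB.farlin (by linarith) (by norm_num) (fun x hx => (d11 x hx).1) (fun x hx => (d11 x hx).2)
        (Or.inr (by linarith)) (by rw [abs_le]; constructor <;> norm_num)
        (by rw [abs_le]; constructor <;> norm_num) (by norm_num)
    have q12 : PB (ker (-1) R (zR1 R) (zR2 R)) 7 (R-2) 0 := PB.zero (by linarith) d12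
    have q13 : PB (ker (-1) R (zR1 R) (zR2 R)) (R-2) (R-1) (-1/8) :=
      PB.lin (m := -1) (c := -2) (by linarith) (by norm_num) (fun x hx => (d13 x hx).1)
        (fun x hx => by rw [(d13 x hx).2]; ring)
        (by rw [show R - 1 - R = -1 by ring, show R - 2 - R = -2 by ring]; norm_num)
    have q14 : PB (ker (-1) R (zR1 R) (zR2 R)) (R-1) (R+1) 0 :=
      PB.tail (fun x hx => (d14 x hx).1) (fun x hx => by rw [(d14 x hx).2]; ring)
    have q15 : PB (ker (-1) R (zR1 R) (zR2 R)) (R+1) (R+2) (-1/8) :=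
      PB.lin (m := -1) (c := 2) (by linarith) (by norm_num) (fun x hx => (d15 x hx).1)
        (fun x hx => by rw [(d15 x hx).2]; ring)
        (by rw [show R + 1 - R = 1 by ring, show R + 2 - R = 2 by ring]; norm_num)
    have := total hR ((left (-1) R (by norm_num) (by linarith)).trans (q5.trans (q6.trans (q7.trans
      (q8.trans (q9.trans (q10.trans (q11.trans (q12.trans (q13.trans (q14.trans q15)))))))))))
    have h2 := lt_of_le_of_lt this (show _ < (0:ℝ) by norm_num)
    unfold ker at h2
    rw [MeasureTheory.integral_const_mul] at h2
    linarith
end
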